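/- (Hardy–Stein identity.) Let p ≥ 2 and let f be holomorphic on the unit disk 𝔻. Then for 0 < r < 1, (1/2π) ∫₀^{2π} |f(√r e^{iθ})|^p dθ = |f(0)|^p + (p²/2π) ∫₀^{√r} (1/ρ) ( ∫_{|z|<ρ} |f(z)|^{p−2} |f'(z)|² dA(z) ) dρ. -/

import Mathlib

open MeasureTheory Metric

noncomputable def hsq (p : ℝ) (w : ℂ) : ℂ := ((‖w‖ ^ (p - 2) : ℝ) : ℂ) * star w
noncomputable def hsm (p : ℝ) (w : ℂ) : ℂ := (((p - 2) / 2 * ‖w‖ ^ (p - 4) : ℝ) : ℂ) * (star w) ^ 2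
noncomputable def hsa (p : ℝ) (w : ℂ) : ℂ := ((p / 2 * ‖w‖ ^ (p - 2) : ℝ) : ℂ)

lemma hsa_cont {p : ℝ} (hp : 2 ≤ p) : Continuous (hsa p) := by
  unfold hsa
  refine Complex.continuous_ofReal.comp (continuous_const.mul ?_)
  exact continuous_norm.rpow_const (fun x => Or.inr (by linarith))

lemma hsq_cont {p : ℝ} (hp : 2 ≤ p) : Continuous (hsq p) := by
  unfold hsq
  refine (Complex.continuous_ofReal.comp ?_).mul continuous_star
  exact continuous_norm.rpow_const (fun x => Or.inr (by linarith))

lemma hsm_cont {p : ℝ} (hp : 2 ≤ p) : Continuous (hsm p) := by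
  rcases eq_or_lt_of_le hp with rfl | hp
  · have : hsm 2 = fun _ => 0 := by ext w; simp [hsm]
    rw [this]; exact continuous_const
  rw [continuous_iff_continuousAt]
  intro w
  by_cases hw : w = 0
  · subst hw
    have h0 : hsm p 0 = 0 := by simp [hsm]
    rw [ContinuousAt, h0, tendsto_zero_iff_norm_tendsto_zero]
    have h1 : Continuous (fun x : ℂ => (p-2)/2 * ‖x‖ ^ (p - 2)) := 
      continuous_const.mul (continuous_norm.rpow_const (fun x => Or.inr (by linarith)))
    have h2 := h1.tendsto 0
    rw [norm_zero, Real.zero_rpow (by linarith), mul_zero] at h2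
    refine h2.congr fun x => ?_
    by_cases hx : x = 0
    · subst hx; simp [hsm, Real.zero_rpow (show p - 2 ≠ 0 by linarith)]
    have hx' : 0 < ‖x‖ := norm_pos_iff.2 hx
    rw [hsm, norm_mul, norm_pow, norm_star, Complex.norm_real, Real.norm_of_nonneg (mul_nonneg (by linarith) (by positivity)),
      mul_assoc, ← Real.rpow_natCast, ← Real.rpow_add hx']
    congr 2
    push_cast; ring
  · unfold hsm
    refine ContinuousAt.mul (Complex.continuous_ofReal.continuousAt.comp (continuousAt_const.mul ?_)) (by fun_prop)
    exact continuous_norm.continuousAt.rpow_const (Or.inl (by simpa using hw))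

lemma hsq_deriv {p : ℝ} (hp : 2 ≤ p) {g : ℝ → ℂ} {v : ℂ} {x : ℝ} (hg : HasDerivAt g v x) :
    HasDerivAt (fun t => hsq p (g t)) (hsa p (g x) * star v + hsm p (g x) * v) x := by
  rcases eq_or_lt_of_le hp with rfl | hp
  · simp only [hsq, hsa, hsm]
    simpa using hg.star
  by_cases hw : g x = 0
  · have h1 : HasFDerivAt (hsq p) (0 : ℂ →L[ℝ] ℂ) (g x) := by
      rw [hw]
      refine .of_isLittleO ?_
      simp only [hsq, norm_zero, star_zero, mul_zero, sub_zero, zero_apply]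
      have h3 : (fun x : ℂ => ((‖x‖ ^ (p - 2) : ℝ) : ℂ)) =o[nhds 0] (fun _ => (1:ℂ)) := by
        refine (Asymptotics.isLittleO_const_iff one_ne_zero).mpr ?_
        have h1 : Continuous (fun x : ℂ => ((‖x‖ ^ (p - 2) : ℝ) : ℂ)) := 
          Complex.continuous_ofReal.comp (continuous_norm.rpow_const (fun x => Or.inr (by linarith)))
        have h2 := h1.tendsto 0
        rwa [norm_zero, Real.zero_rpow (by linarith), Complex.ofReal_zero] at h2
      have h4 : (fun x : ℂ => star x) =O[nhds 0] (fun x => x) :=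
        Asymptotics.IsBigO.of_bound 1 (by simp)
      simpa using h3.mul_isBigO h4
    have := h1.comp_hasDerivAt x hg
    refine this.congr_deriv ?_
    simp [hsa, hsm, hw, Real.zero_rpow (show p - 2 ≠ 0 by linarith)]
  · have hw' : 0 < ‖g x‖ := norm_pos_iff.2 hw
    have h1 := (hg.norm_sq.rpow_const (p := (p-2)/2) (Or.inl (by positivity))).ofReal_comp.mul hg.star
    have e : ∀ t : ℝ, (‖g t‖ ^ 2) ^ ((p-2)/2) = ‖g t‖ ^ (p-2) := fun t => by
      rw [← Real.rpow_natCast_mul (norm_nonneg _)]; congr 1; push_cast; ring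
    have e2 : (‖g x‖ ^ 2) ^ ((p-2)/2 - 1) = ‖g x‖ ^ (p-4) := by
      rw [← Real.rpow_natCast_mul (norm_nonneg _)]; congr 1; push_cast; ring
    have e3 : ‖g x‖ ^ (p-2) = ‖g x‖ ^ (p-4) * ‖g x‖ ^ 2 := by
      rw [← Real.rpow_natCast, ← Real.rpow_add hw']; congr 1; push_cast; ring
    simp only [e, e2] at h1
    refine h1.congr_deriv ?_
    simp only [hsa, hsm, e3]
    have e4 : ((2 * inner ℝ (g x) v : ℝ) : ℂ) = star (g x) * v + g x * star v := by
      apply Complex.ext <;> simp [Complex.inner] <;> ring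
    have e5 : ((‖g x‖ ^ 2 : ℝ) : ℂ) = g x * star (g x) := by
      rw [Complex.star_def, Complex.mul_conj, Complex.normSq_eq_norm_sq]
    rw [Complex.ofReal_mul, Complex.ofReal_mul, e4]
    simp only [Complex.ofReal_mul, e5]
    push_cast
    ring

lemma hsn_deriv {p : ℝ} (hp : 2 ≤ p) {g : ℝ → ℂ} {v : ℂ} {x : ℝ} (hg : HasDerivAt g v x) :
    HasDerivAt (fun t => ‖g t‖ ^ p) (p * (hsq p (g x) * v).re) x := by
  have := (hasFDerivAt_norm_rpow (g x) (show 1 < p by linarith)).comp_hasDerivAt x hg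
  refine this.congr_deriv ?_
  simp [hsq, Complex.inner]
  ring

lemma hs_swap {E : Type*} [NormedAddCommGroup E] [NormedSpace ℝ E] {F : ℝ → ℝ → E} {R : ℝ} (hR : 0 ≤ R)
    (hF : ContinuousOn (Function.uncurry F) (Set.Icc 0 R ×ˢ Set.univ)) :
    ∫ x in (0:ℝ)..R, ∫ y in (-Real.pi)..Real.pi, F x y = ∫ y in (-Real.pi)..Real.pi, ∫ x in (0:ℝ)..R, F x y := by
  apply intervalIntegral_intervalIntegral_swap
  have : IntegrableOn (Function.uncurry F) (Set.Icc 0 R ×ˢ Set.Icc (-Real.pi) Real.pi) :=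
    (hF.mono (Set.prod_mono le_rfl (Set.subset_univ _))).integrableOn_compact (isCompact_Icc.prod isCompact_Icc)
  refine this.mono_set (Set.prod_mono ?_ ?_)
  · rw [Set.uIoc_of_le hR]; exact Set.Ioc_subset_Icc_self
  · rw [Set.uIoc_of_le (by linarith [Real.pi_pos])]; exact Set.Ioc_subset_Icc_self

lemma hs_polar {F : ℂ → ℝ} {R : ℝ} (hR : 0 ≤ R) (hF : ContinuousOn F (closedBall 0 R)) :
    ∫ z in ball (0:ℂ) R, F z = ∫ s in (0:ℝ)..R, ∫ θ in (-Real.pi)..Real.pi, s * F (s * Complex.exp (θ * Complex.I)) := by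
  rw [← integral_indicator measurableSet_ball, ← Complex.integral_comp_polarCoord_symm]
  have hpi : -Real.pi ≤ Real.pi := by linarith [Real.pi_pos]
  have hc : ContinuousOn (fun q : ℝ × ℝ => q.1 * F (q.1 * Complex.exp (q.2 * Complex.I))) (Set.Icc 0 R ×ˢ Set.Icc (-Real.pi) Real.pi) := by
    refine continuousOn_fst.mul (hF.comp (by fun_prop) ?_)
    rintro ⟨s, t⟩ ⟨hs, -⟩
    simpa [Complex.norm_exp_ofReal_mul_I, abs_of_nonneg hs.1] using hs.2
  have hi := hc.integrableOn_compact (μ := volume) (isCompact_Icc.prod isCompact_Icc)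
  have e1 : ∀ q ∈ polarCoord.target, q.1 • (ball (0:ℂ) R).indicator F (Complex.polarCoord.symm q)
      = (Set.Ioo 0 R ×ˢ Set.Ioo (-Real.pi) Real.pi).indicator (fun q : ℝ × ℝ => q.1 * F (q.1 * Complex.exp (q.2 * Complex.I))) q := by
    rintro ⟨s, t⟩ ⟨hs, ht⟩
    have hs' : 0 < s := hs
    have e : Complex.polarCoord.symm (s, t) = s * Complex.exp (t * Complex.I) := by
      rw [Complex.polarCoord_symm_apply, Complex.exp_mul_I]; simp
    have e' : ‖(s:ℂ) * Complex.exp (t * Complex.I)‖ = s := by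
      simp [Complex.norm_exp_ofReal_mul_I, abs_of_pos hs']
    rw [e]
    by_cases h : s < R
    · rw [Set.indicator_of_mem (by rwa [mem_ball_zero_iff, e']), Set.indicator_of_mem (Set.mk_mem_prod (Set.mem_Ioo.2 ⟨hs', h⟩) ht)]; rfl
    · rw [Set.indicator_of_notMem (by rwa [mem_ball_zero_iff, e']), Set.indicator_of_notMem (fun h' => h h'.1.2)]; simp
  rw [setIntegral_congr_fun polarCoord.open_target.measurableSet e1,
    setIntegral_indicator (measurableSet_Ioo.prod measurableSet_Ioo)]
  have e2 : polarCoord.target ∩ (Set.Ioo 0 R ×ˢ Set.Ioo (-Real.pi) Real.pi) = Set.Ioo 0 R ×ˢ Set.Ioo (-Real.pi) Real.pi := by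
    apply Set.inter_eq_right.2
    exact Set.prod_mono Set.Ioo_subset_Ioi_self le_rfl
  rw [e2, Measure.volume_eq_prod, setIntegral_prod _ (hi.mono_set (Set.prod_mono Set.Ioo_subset_Icc_self Set.Ioo_subset_Icc_self))]
  rw [intervalIntegral.integral_of_le hR, integral_Ioc_eq_integral_Ioo]
  simp only [intervalIntegral.integral_of_le hpi, integral_Ioc_eq_integral_Ioo]

lemma hs_cont {E : Type*} [TopologicalSpace E] {F : ℂ → E} (hF : ContinuousOn F (ball 0 1)) {R : ℝ} (hR : R < 1) :
    ContinuousOn (fun q : ℝ × ℝ => F (q.1 * Complex.exp (q.2 * Complex.I))) (Set.Icc 0 R ×ˢ Set.univ) := by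
  refine hF.comp (by fun_prop) ?_
  rintro ⟨s, t⟩ ⟨hs, -⟩
  simpa [Complex.norm_exp_ofReal_mul_I, abs_of_nonneg hs.1] using hs.2.trans_lt hR

lemma hs_curve {f : ℂ → ℂ} (hf : DifferentiableOn ℂ f (ball (0 : ℂ) 1)) {g : ℝ → ℂ} {v : ℂ} {x : ℝ}
    (hg : HasDerivAt g v x) (hx : g x ∈ ball (0:ℂ) 1) : HasDerivAt (fun t => f (g t)) (deriv f (g x) * v) x := 
  (hf.differentiableAt (isOpen_ball.mem_nhds hx)).hasDerivAt.comp_of_eq x hg rfl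

lemma hs_K {p : ℝ} (hp : 2 ≤ p) {f : ℂ → ℂ} (hf : DifferentiableOn ℂ f (ball (0 : ℂ) 1)) {g : ℝ → ℂ} {v : ℂ} {x : ℝ}
    (hg : HasDerivAt g v x) (hx : g x ∈ ball (0:ℂ) 1) :
    HasDerivAt (fun t => hsq p (f (g t)) * deriv f (g t) * g t) 
      (((hsa p (f (g x)) * star (deriv f (g x) * v) + hsm p (f (g x)) * (deriv f (g x) * v)) * deriv f (g x)
       + hsq p (f (g x)) * (deriv (deriv f) (g x) * v)) * g x + hsq p (f (g x)) * deriv f (g x) * v) x := 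
  ((hsq_deriv hp (hs_curve hf hg hx)).mul (hs_curve (hf.deriv isOpen_ball) hg hx)).mul hg

lemma hs_green {p : ℝ} (hp : 2 ≤ p) {f : ℂ → ℂ} (hf : DifferentiableOn ℂ f (ball (0 : ℂ) 1)) {R : ℝ} (hR : 0 < R) (hR1 : R < 1) :
    ∫ θ in (-Real.pi)..Real.pi, (hsq p (f (R * Complex.exp (θ * Complex.I))) * deriv f (R * Complex.exp (θ * Complex.I)) * (R * Complex.exp (θ * Complex.I))).re
     = p * ∫ z in ball (0 : ℂ) R, ‖f z‖ ^ (p - 2) * ‖deriv f z‖ ^ 2 := by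
  have hd := hf.deriv isOpen_ball
  have hdd := hd.deriv isOpen_ball
  have ca := (hsa_cont hp).comp_continuousOn hf.continuousOn
  have cm := (hsm_cont hp).comp_continuousOn hf.continuousOn
  have cq := (hsq_cont hp).comp_continuousOn hf.continuousOn
  have ca' := hs_cont ca hR1
  have cm' := hs_cont cm hR1
  have cq' := hs_cont cq hR1
  have cd' := hs_cont hd.continuousOn hR1
  have cdd' := hs_cont hdd.continuousOn hR1
  simp only [Function.comp_apply] at ca' cm' cq'
  -- general derivative expression
  set D : ℂ → ℂ → ℂ := fun z v => ((hsa p (f z) * star (deriv f z * v) + hsm p (f z) * (deriv f z * v)) * deriv f z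
       + hsq p (f z) * (deriv (deriv f) z * v)) * z + hsq p (f z) * deriv f z * v with hD
  set P : ℝ → ℝ → ℂ := fun s t => s * Complex.exp (t * Complex.I) with hP
  set K : ℂ → ℂ := fun z => hsq p (f z) * deriv f z * z with hK
  have hPm : ∀ s ∈ Set.Icc 0 R, ∀ t, P s t ∈ ball (0:ℂ) 1 := by
    intro s hs t
    simpa [hP, Complex.norm_exp_ofReal_mul_I, abs_of_nonneg hs.1] using hs.2.trans_lt hR1
  have dS : ∀ s t, HasDerivAt (fun s => P s t) (Complex.exp (t * Complex.I)) s := by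
    intro s t
    simpa [hP] using (Complex.ofRealCLM.hasDerivAt (x := s)).mul_const (Complex.exp (t * Complex.I))
  have dT : ∀ s t, HasDerivAt (fun t => P s t) (Complex.I * P s t) t := by
    intro s t
    have := (((Complex.ofRealCLM.hasDerivAt (x := t)).mul_const Complex.I).cexp).const_mul (s:ℂ)
    refine this.congr_deriv ?_
    simp [hP]; ring
  have cDs : ContinuousOn (Function.uncurry fun s t => (D (P s t) (Complex.exp (t * Complex.I)))) (Set.Icc 0 R ×ˢ Set.univ) := by
    simp only [hD, hP, Function.uncurry_def]
    fun_prop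
  have cDt : ContinuousOn (Function.uncurry fun s t => (D (P s t) (Complex.I * P s t))) (Set.Icc 0 R ×ˢ Set.univ) := by
    simp only [hD, hP, Function.uncurry_def]
    fun_prop
  have sec1 : ∀ {E : Type} [NormedAddCommGroup E] {F : ℝ → ℝ → E}, ContinuousOn (Function.uncurry F) (Set.Icc 0 R ×ˢ Set.univ) →
      ∀ t, IntervalIntegrable (fun s => F s t) volume 0 R := by
    intro E _ F hF t
    refine ContinuousOn.intervalIntegrable ?_
    rw [Set.uIcc_of_le hR.le]
    exact hF.comp (f := fun s => (s, t)) (by fun_prop) (fun s hs => ⟨hs, trivial⟩)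
  have sec2 : ∀ {E : Type} [NormedAddCommGroup E] {F : ℝ → ℝ → E}, ContinuousOn (Function.uncurry F) (Set.Icc 0 R ×ˢ Set.univ) →
      ∀ s ∈ Set.Icc 0 R, IntervalIntegrable (fun t => F s t) volume (-Real.pi) Real.pi := by
    intro E _ F hF s hs
    refine ContinuousOn.intervalIntegrable ?_
    exact hF.comp (f := fun t => (s, t)) (by fun_prop) (fun t ht => ⟨hs, trivial⟩)
  -- FTC in s
  have ftc1 : ∀ t, ∫ s in (0:ℝ)..R, D (P s t) (Complex.exp (t * Complex.I)) = K (P R t) := by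
    intro t
    rw [intervalIntegral.integral_eq_sub_of_hasDerivAt (f := fun s => K (P s t)) _ (sec1 cDs t)]
    · simp [hK, hP]
    · intro s hs
      rw [Set.uIcc_of_le hR.le] at hs
      exact hs_K hp hf (dS s t) (hPm s hs t)
  have ftc2 : ∀ s ∈ Set.Icc 0 R, ∫ t in (-Real.pi)..Real.pi, D (P s t) (Complex.I * P s t) = 0 := by
    intro s hs
    rw [intervalIntegral.integral_eq_sub_of_hasDerivAt (f := fun t => K (P s t)) _ (sec2 cDt s hs)]
    · have : P s Real.pi = P s (-Real.pi) := by simp [hP, Complex.exp_neg, Complex.exp_pi_mul_I]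
      simp [this]
    · intro t _
      exact hs_K hp hf (dT s t) (hPm s hs t)
  -- key identity
  have key : ∀ s t : ℝ, (s:ℂ) * D (P s t) (Complex.exp (t * Complex.I)) + Complex.I * D (P s t) (Complex.I * P s t)
      = s * ((p * (s * (‖f (P s t)‖ ^ (p-2) * ‖deriv f (P s t)‖^2)) : ℝ) : ℂ) := by
    intro s t
    set e := Complex.exp (t * Complex.I) with he
    have hP' : P s t = s * e := rfl
    set z := P s t
    have hee : e * star e = 1 := by
      rw [Complex.star_def, Complex.mul_conj, Complex.normSq_eq_norm_sq, he, Complex.norm_exp_ofReal_mul_I]; simp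
    have hdd : ((‖deriv f z‖^2 : ℝ) : ℂ) = deriv f z * star (deriv f z) := by
      rw [Complex.star_def, Complex.mul_conj, Complex.normSq_eq_norm_sq]
    have hss : star (s:ℂ) = s := by simp
    have hii : star Complex.I = - Complex.I := by simp
    have hI := Complex.I_sq
    simp only [hD, hsa]
    simp only [Complex.ofReal_mul, hdd]
    rw [hP']
    simp only [star_mul', hss, hii]
    generalize deriv (deriv f) z = d2 at *
    generalize deriv f z = d1 at *
    generalize f z = d0 at *
    generalize star e = e' at *
    generalize star d1 = d1' at *
    push_cast
    linear_combination (((hsm p d0 * d1 * d1 + hsq p d0 * d2) * (s * e) + hsq p d0 * d1) * s * e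
      - (p / 2 * ((‖d0‖ ^ (p - 2) : ℝ) : ℂ)) * d1 * (s * e) * d1' * s * e') * hI
      + (2 * (p / 2 * ((‖d0‖ ^ (p - 2) : ℝ) : ℂ)) * d1 * d1' * s ^ 2) * hee
  have inner : ∀ s ∈ Set.Ioo 0 R, ∫ t in (-Real.pi)..Real.pi, D (P s t) (Complex.exp (t * Complex.I))
      = ((∫ t in (-Real.pi)..Real.pi, s * (p * (‖f (P s t)‖ ^ (p-2) * ‖deriv f (P s t)‖^2)) : ℝ) : ℂ) := by
    intro s hs
    have hs' := Set.Ioo_subset_Icc_self hs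
    have hs0 : (s:ℂ) ≠ 0 := by exact_mod_cast hs.1.ne'
    have h1 : ∫ t in (-Real.pi)..Real.pi, ((s:ℂ) * D (P s t) (Complex.exp (t * Complex.I)) + Complex.I * D (P s t) (Complex.I * P s t))
       = s * ∫ t in (-Real.pi)..Real.pi, D (P s t) (Complex.exp (t * Complex.I)) := by
      rw [intervalIntegral.integral_add ((sec2 cDs s hs').const_mul _) ((sec2 cDt s hs').const_mul _),
        intervalIntegral.integral_const_mul, intervalIntegral.integral_const_mul, ftc2 s hs', mul_zero, add_zero]
    simp only [key] at h1
    rw [intervalIntegral.integral_const_mul, intervalIntegral.integral_ofReal] at h1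
    rw [← mul_left_cancel₀ hs0 h1]
    congr 2
    ext t; ring
  have cF : ContinuousOn (fun z => p * (‖f z‖ ^ (p - 2) * ‖deriv f z‖ ^ 2)) (ball 0 1) := by
    have := hf.continuousOn
    have h2 := hd.continuousOn
    refine continuousOn_const.mul (ContinuousOn.mul ?_ (by fun_prop))
    exact this.norm.rpow_const (fun x _ => Or.inr (by linarith))
  have fin : ∫ t in (-Real.pi)..Real.pi, K (P R t) = ((p * ∫ z in ball (0 : ℂ) R, ‖f z‖ ^ (p - 2) * ‖deriv f z‖ ^ 2 : ℝ) : ℂ) := by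
    rw [← integral_const_mul, hs_polar hR.le (cF.mono (closedBall_subset_ball hR1))]
    rw [← intervalIntegral.integral_ofReal]
    simp only [← ftc1]
    rw [← hs_swap hR.le cDs]
    apply intervalIntegral.integral_congr_Ioo_of_le hR.le
    intro s hs
    exact inner s hs
  have := congrArg Complex.re fin
  rw [Complex.ofReal_re] at this
  rw [← this]
  have hKi : IntervalIntegrable (fun t => K (P R t)) volume (-Real.pi) Real.pi := by
    refine sec2 (F := fun s t => K (P s t)) ?_ R ⟨hR.le, le_rfl⟩
    simp only [hK, hP, Function.uncurry_def]
    fun_prop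
  exact Complex.reCLM.intervalIntegral_comp_comm hKi

theorem hardy_stein_identity
    (p : ℝ) (hp : 2 ≤ p)
    (f : ℂ → ℂ) (hf : DifferentiableOn ℂ f (ball (0 : ℂ) 1))
    (r : ℝ) (hr0 : 0 < r) (hr1 : r < 1) :
    (1 / (2 * Real.pi)) *
        ∫ θ in (0 : ℝ)..(2 * Real.pi),
          ‖f ((Real.sqrt r : ℂ) * Complex.exp (θ * Complex.I))‖ ^ p =
      ‖f 0‖ ^ p +
        (p ^ 2 / (2 * Real.pi)) *
          ∫ ρ in (0 : ℝ)..(Real.sqrt r),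
            (1 / ρ) * ∫ z in ball (0 : ℂ) ρ, ‖f z‖ ^ (p - 2) * ‖deriv f z‖ ^ 2 := by
  have hR0 : 0 < Real.sqrt r := Real.sqrt_pos.2 hr0
  have hR1 : Real.sqrt r < 1 := by rw [Real.sqrt_lt' one_pos]; simpa using hr1
  generalize Real.sqrt r = R at *
  have hper : Function.Periodic (fun θ : ℝ => ‖f ((R : ℂ) * Complex.exp (θ * Complex.I))‖ ^ p) (2 * Real.pi) := by
    intro θ
    have : Complex.exp (((θ + 2 * Real.pi : ℝ) : ℂ) * Complex.I) = Complex.exp (θ * Complex.I) := by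
      push_cast; rw [add_mul, Complex.exp_add, Complex.exp_two_pi_mul_I, mul_one]
    simp only [this]
  have h1 := hper.intervalIntegral_add_eq 0 (-Real.pi)
  rw [zero_add, show -Real.pi + 2 * Real.pi = Real.pi by ring] at h1
  rw [h1]
  have cq := (hsq_cont hp).comp_continuousOn hf.continuousOn
  have cq' := hs_cont cq hR1
  have cd' := hs_cont (hf.deriv isOpen_ball).continuousOn hR1
  simp only [Function.comp_apply] at cq'
  set P : ℝ → ℝ → ℂ := fun s t => s * Complex.exp (t * Complex.I) with hP
  have hPm : ∀ s ∈ Set.Icc 0 R, ∀ t, P s t ∈ ball (0:ℂ) 1 := by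
    intro s hs t
    simpa [hP, Complex.norm_exp_ofReal_mul_I, abs_of_nonneg hs.1] using hs.2.trans_lt hR1
  have dS : ∀ s t, HasDerivAt (fun s => P s t) (Complex.exp (t * Complex.I)) s := by
    intro s t
    simpa [hP] using (Complex.ofRealCLM.hasDerivAt (x := s)).mul_const (Complex.exp (t * Complex.I))
  set D : ℝ → ℝ → ℝ := fun s t => p * (hsq p (f (P s t)) * (deriv f (P s t) * Complex.exp (t * Complex.I))).re with hD
  have cD : ContinuousOn (Function.uncurry D) (Set.Icc 0 R ×ˢ Set.univ) := by
    simp only [hD, hP, Function.uncurry_def]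
    refine continuousOn_const.mul (Complex.continuous_re.comp_continuousOn ?_)
    fun_prop
  have ftc : ∀ t, ∫ s in (0:ℝ)..R, D s t = ‖f (P R t)‖ ^ p - ‖f 0‖ ^ p := by
    intro t
    rw [intervalIntegral.integral_eq_sub_of_hasDerivAt (f := fun s => ‖f (P s t)‖ ^ p)]
    · simp [hP]
    · intro s hs
      rw [Set.uIcc_of_le hR0.le] at hs
      exact hsn_deriv hp (hs_curve hf (dS s t) (hPm s hs t))
    · refine ContinuousOn.intervalIntegrable ?_
      rw [Set.uIcc_of_le hR0.le]
      exact cD.comp (f := fun s => (s, t)) (by fun_prop) (fun s hs => ⟨hs, trivial⟩)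
  have hsw := hs_swap hR0.le cD
  simp only [ftc] at hsw
  have hint : IntervalIntegrable (fun t => ‖f (P R t)‖ ^ p) volume (-Real.pi) Real.pi := by
    refine ContinuousOn.intervalIntegrable ?_
    refine ContinuousOn.rpow_const ?_ (fun x _ => Or.inr (by linarith))
    refine (hf.continuousOn.comp (f := fun t => P R t) (by fun_prop) (fun t _ => hPm R ⟨hR0.le, le_rfl⟩ t)).norm
  rw [intervalIntegral.integral_sub hint (by simp), intervalIntegral.integral_const] at hsw
  have hin : ∫ x in (0:ℝ)..R, ∫ y in (-Real.pi)..Real.pi, D x y =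
     ∫ ρ in (0 : ℝ)..R, p ^ 2 * ((1 / ρ) * ∫ z in ball (0 : ℂ) ρ, ‖f z‖ ^ (p - 2) * ‖deriv f z‖ ^ 2) := by
    apply intervalIntegral.integral_congr_Ioo_of_le hR0.le
    intro s hs
    have hg := hs_green hp hf hs.1 (hs.2.trans hR1)
    have : p ^ 2 * ((1 / s) * ∫ z in ball (0 : ℂ) s, ‖f z‖ ^ (p - 2) * ‖deriv f z‖ ^ 2) = 
      p / s * (p * ∫ z in ball (0 : ℂ) s, ‖f z‖ ^ (p - 2) * ‖deriv f z‖ ^ 2) := by ring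
    simp only [this]
    rw [← hg, ← intervalIntegral.integral_const_mul]
    congr 1
    ext t
    have hs0 : s ≠ 0 := hs.1.ne'
    have : hsq p (f (P s t)) * deriv f (P s t) * ((s:ℂ) * Complex.exp (t * Complex.I)) = 
      (s:ℂ) * (hsq p (f (P s t)) * (deriv f (P s t) * Complex.exp (t * Complex.I))) := by ring
    simp only [hD]
    change _ = p / s * (hsq p (f (P s t)) * deriv f (P s t) * ((s:ℂ) * Complex.exp (t * Complex.I))).re
    rw [this, Complex.re_ofReal_mul]
    field_simp
  rw [hin, intervalIntegral.integral_const_mul] at hsw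
  have hpi := Real.pi_pos
  have : ∫ t in (-Real.pi)..Real.pi, ‖f (P R t)‖ ^ p = 2 * Real.pi * ‖f 0‖ ^ p + p ^ 2 * ∫ ρ in (0 : ℝ)..R, ((1 / ρ) * ∫ z in ball (0 : ℂ) ρ, ‖f z‖ ^ (p - 2) * ‖deriv f z‖ ^ 2) := by
    rw [hsw]; simp only [smul_eq_mul]; ring
  change 1 / (2 * Real.pi) * ∫ t in (-Real.pi)..Real.pi, ‖f (P R t)‖ ^ p = _
  rw [this]
  field_simp
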